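/- Let p_n be the number of king permutations of length n avoiding the mesh pattern Nr. 16, where an occurrence of this pattern is a pair of indices i < j with σ_i < σ_j such that every element before position i has value less than σ_i and every element after position i (other than σ_i itself) has value greater than σ_i (equivalently, i is a strong fixed point of σ with i < n and j is any index with i < j ≤ n). Let P(t) = Σ_{n≥0} p_n t^n. Then (1 + t + t·A(t))·P(t) = (1+t)^2·A(t) as formal power series over ℚ. -/

import Mathlib

/-- A permutation of `{0, …, n-1}` is a *king permutation* if consecutive entries
differ by more than 1 in absolute value. -/
def IsKing {n : ℕ} (σ : Equiv.Perm (Fin n)) : Prop :=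
  ∀ i : Fin n, ∀ h : (i : ℕ) + 1 < n,
    1 < |((σ ⟨(i : ℕ) + 1, h⟩ : ℕ) : ℤ) - ((σ i : ℕ) : ℤ)|

/-- `kingCount n = A_n`, the number of king permutations of length `n`. -/
noncomputable def kingCount (n : ℕ) : ℕ :=
  Nat.card {σ : Equiv.Perm (Fin n) // IsKing σ}

/-- `A(t) = Σ_{n≥0} A_n t^n` as a formal power series over `ℚ`. -/
noncomputable def kingA : PowerSeries ℚ :=
  PowerSeries.mk fun n => (kingCount n : ℚ)

/-- An occurrence of the mesh pattern Nr. 16 in `σ`: positions `i < j` with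
`σ i < σ j`, every element before position `i` smaller than `σ i`, and every
element after position `i` greater than `σ i`. -/
def OccP {n : ℕ} (σ : Equiv.Perm (Fin n)) (i j : Fin n) : Prop :=
  i < j ∧ σ i < σ j ∧
    (∀ k : Fin n, k < i → σ k < σ i) ∧
    (∀ k : Fin n, i < k → σ i < σ k)

/-- The number of occurrences of the mesh pattern Nr. 16 in `σ`. -/
noncomputable def occP {n : ℕ} (σ : Equiv.Perm (Fin n)) : ℕ :=
  Nat.card {p : Fin n × Fin n // OccP σ p.1 p.2}

/-- `P(t) = Σ_{n≥0} p_n t^n`, where `p_n` counts king permutations of length `n`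
avoiding the mesh pattern Nr. 16. -/
noncomputable def Pav : PowerSeries ℚ :=
  PowerSeries.mk fun n =>
    (Nat.card {σ : Equiv.Perm (Fin n) // IsKing σ ∧ occP σ = 0} : ℚ)

/-!
Cut a king permutation with a strong fixed point at its first one: `σ = α ⊕ 1 ⊕ β`. Here `α` is any
king permutation without strong fixed points and `β` any king permutation whose first entry is not
its least one, for otherwise the fixed point and the head of `β` would be consecutive values. With
the generating series `F` and `G` of the two classes this gives `A = F + tFG`. Cutting only at a
strong fixed point in the first position gives `A = (1 + t)G`, and since `σ` avoids the pattern iff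
it has no strong fixed point before its last position, cutting at the last position gives
`P = (1 + t)F`. Hence `(1 + t + tA)P = (1 + t)²(F + tFG) = (1 + t)²A`.
-/

section StrongFixedPt

variable {α : Type*}

/-- The strong fixed points of a permutation, stated for an arbitrary ordered type: the entry at
position `i` exceeds all earlier entries and is exceeded by all later ones. -/
def IsStrongFixedPt [LT α] (σ : Equiv.Perm α) (i : α) : Prop :=
  (∀ j < i, σ j < σ i) ∧ ∀ j, i < j → σ i < σ j

variable [LinearOrder α] {σ : Equiv.Perm α} {i j : α}

theorem IsStrongFixedPt.apply_lt_apply_iff (h : IsStrongFixedPt σ i) : σ j < σ i ↔ j < i := by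
  refine ⟨fun hlt => ?_, h.1 j⟩
  by_contra! hle
  rcases hle.eq_or_lt with rfl | hij
  · exact hlt.false
  · exact hlt.not_gt (h.2 j hij)

theorem IsStrongFixedPt.apply_le_apply_iff (h : IsStrongFixedPt σ i) : σ j ≤ σ i ↔ j ≤ i := by
  rw [le_iff_lt_or_eq, le_iff_lt_or_eq, h.apply_lt_apply_iff, σ.injective.eq_iff]

theorem isStrongFixedPt_iff_of_isMin (hi : IsMin i) : IsStrongFixedPt σ i ↔ IsMin (σ i) := by
  refine ⟨fun h => σ.forall_congr_right.mp ?_, fun h => ⟨fun j hj => (hi.not_lt hj).elim, ?_⟩⟩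
  · exact fun j _ => not_lt.mp fun hlt => hi.not_lt (h.apply_lt_apply_iff.mp hlt)
  · exact fun j hij => (h.isBot _).lt_of_ne (σ.injective.ne hij.ne)

theorem isStrongFixedPt_iff_of_isMax (hi : IsMax i) : IsStrongFixedPt σ i ↔ IsMax (σ i) := by
  refine ⟨fun h => σ.forall_congr_right.mp ?_, fun h => ⟨?_, fun j hj => (hi.not_lt hj).elim⟩⟩
  · exact fun j _ => (hi.isTop j).eq_or_lt.elim (fun e => e ▸ le_rfl) fun hlt => (h.1 j hlt).le
  · exact fun j hij => (h.isTop _).lt_of_ne (σ.injective.ne hij.ne)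

theorem IsStrongFixedPt.apply_eq {n : ℕ} {σ : Equiv.Perm (Fin n)} {i : Fin n}
    (h : IsStrongFixedPt σ i) : σ i = i := by
  have hmap : (Finset.Iio i).map σ.toEmbedding = Finset.Iio (σ i) := by
    ext x
    obtain ⟨j, rfl⟩ := σ.surjective x
    simp [h.apply_lt_apply_iff]
  have hcard := congrArg Finset.card hmap
  rw [Finset.card_map, Fin.card_Iio, Fin.card_Iio] at hcard
  exact Fin.ext hcard.symm

open Classical in
/-- The first strong fixed point of a permutation, with value `⊤` when there is none. -/
noncomputable def firstStrongFixedPt [Fintype α] (σ : Equiv.Perm α) : WithTop α :=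
  (Finset.univ.filter (IsStrongFixedPt σ)).min

variable [Fintype α]

theorem firstStrongFixedPt_eq_top_iff : firstStrongFixedPt σ = ⊤ ↔ ∀ i, ¬ IsStrongFixedPt σ i := by
  simp [firstStrongFixedPt, Finset.min_eq_top, Finset.filter_eq_empty_iff]

theorem firstStrongFixedPt_eq_coe_iff :
    firstStrongFixedPt σ = i ↔ IsStrongFixedPt σ i ∧ ∀ j < i, ¬ IsStrongFixedPt σ j := by
  classical
  unfold firstStrongFixedPt
  constructor
  · intro h
    refine ⟨by simpa using Finset.mem_of_min h, fun j hj hσj => ?_⟩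
    exact hj.not_ge (Finset.min_le_of_eq (by simpa using hσj) h)
  · rintro ⟨hi, hlt⟩
    refine le_antisymm (Finset.min_le (by simpa using hi)) (Finset.le_min fun j hj => ?_)
    exact WithTop.coe_le_coe.mpr (not_lt.mp fun hji => hlt j hji (by simpa using hj))

end StrongFixedPt

section DirectSum

variable {a b : ℕ}

/-- The direct sum of two permutations: the word `α` followed by the word `β` with all its entries
shifted up by the length of `α`. -/
def permDirectSum (α : Equiv.Perm (Fin a)) (β : Equiv.Perm (Fin b)) : Equiv.Perm (Fin (a + b)) :=
  finSumFinEquiv.permCongr (Equiv.Perm.sumCongr α β)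

@[simp]
theorem permDirectSum_castAdd (α : Equiv.Perm (Fin a)) (β : Equiv.Perm (Fin b)) (i : Fin a) :
    permDirectSum α β (Fin.castAdd b i) = Fin.castAdd b (α i) := by
  simp [permDirectSum]

@[simp]
theorem permDirectSum_natAdd (α : Equiv.Perm (Fin a)) (β : Equiv.Perm (Fin b)) (j : Fin b) :
    permDirectSum α β (Fin.natAdd a j) = Fin.natAdd a (β j) := by
  simp [permDirectSum]

theorem permDirectSum_inj {α α' : Equiv.Perm (Fin a)} {β β' : Equiv.Perm (Fin b)} :
    permDirectSum α β = permDirectSum α' β' ↔ α = α' ∧ β = β' := by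
  rw [permDirectSum, permDirectSum, EmbeddingLike.apply_eq_iff_eq, ← Prod.mk_inj]
  exact Equiv.Perm.sumCongrHom_injective.eq_iff (a := (α, β)) (b := (α', β'))

theorem exists_permDirectSum_eq {σ : Equiv.Perm (Fin (a + b))}
    (h : ∀ i : Fin a, (σ (Fin.castAdd b i) : ℕ) < a) : ∃ α β, permDirectSum α β = σ := by
  let τ : Equiv.Perm (Fin a ⊕ Fin b) := finSumFinEquiv.permCongr.symm σ
  have hτ : Set.MapsTo τ (Set.range Sum.inl) (Set.range Sum.inl) := by
    rintro _ ⟨i, rfl⟩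
    refine ⟨⟨σ (Fin.castAdd b i), h i⟩, ?_⟩
    simp [τ, Equiv.eq_symm_apply]
  obtain ⟨⟨α, β⟩, hαβ⟩ := Equiv.Perm.mem_sumCongrHom_range_of_perm_mapsTo_inl hτ
  exact ⟨α, β, (Equiv.symm_apply_eq _).mp hαβ.symm |>.symm⟩

theorem castAdd_lt_natAdd (i : Fin a) (j : Fin b) : Fin.castAdd b i < Fin.natAdd a j :=
  Nat.lt_add_right j i.isLt

theorem castAdd_covBy_castAdd_iff {i j : Fin a} :
    Fin.castAdd b i ⋖ Fin.castAdd b j ↔ i ⋖ j := by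
  simp

theorem natAdd_covBy_natAdd_iff {i j : Fin b} : Fin.natAdd a i ⋖ Fin.natAdd a j ↔ i ⋖ j := by
  simp [add_assoc]

theorem castAdd_covBy_natAdd_iff {i : Fin a} {j : Fin b} :
    Fin.castAdd b i ⋖ Fin.natAdd a j ↔ IsMax i ∧ IsMin j := by
  simp only [Fin.covBy_iff, Nat.covBy_iff_add_one_eq, Fin.val_castAdd, Fin.val_natAdd]
  constructor
  · intro h
    exact ⟨fun k _ => Fin.le_def.mpr (by omega), fun k _ => Fin.le_def.mpr (by omega)⟩
  · rintro ⟨hi, hj⟩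
    have hlast : a - 1 ≤ i := Fin.le_def.mp (hi.isTop ⟨a - 1, Nat.sub_one_lt_of_lt i.isLt⟩)
    have hzero : (j : ℕ) ≤ 0 := Fin.le_def.mp (hj.isBot ⟨0, j.pos⟩)
    omega

theorem isStrongFixedPt_permDirectSum_castAdd {α : Equiv.Perm (Fin a)} {β : Equiv.Perm (Fin b)}
    {i : Fin a} : IsStrongFixedPt (permDirectSum α β) (Fin.castAdd b i) ↔ IsStrongFixedPt α i := by
  simp [IsStrongFixedPt, Fin.forall_fin_add, castAdd_lt_natAdd, (castAdd_lt_natAdd _ _).not_gt,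
    (Fin.strictMono_castAdd b).lt_iff_lt]

theorem isStrongFixedPt_permDirectSum_natAdd {α : Equiv.Perm (Fin a)} {β : Equiv.Perm (Fin b)}
    {j : Fin b} : IsStrongFixedPt (permDirectSum α β) (Fin.natAdd a j) ↔ IsStrongFixedPt β j := by
  simp [IsStrongFixedPt, Fin.forall_fin_add, castAdd_lt_natAdd, (castAdd_lt_natAdd _ _).not_gt]

theorem isKing_iff_covBy {n : ℕ} {σ : Equiv.Perm (Fin n)} :
    IsKing σ ↔ ∀ i j, i ⋖ j → ¬ σ i ⋖ σ j ∧ ¬ σ j ⋖ σ i := by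
  have one_lt_abs_iff {i j : Fin n} (hij : i ⋖ j) :
      1 < |((σ j : ℕ) : ℤ) - (σ i : ℕ)| ↔ ¬ σ i ⋖ σ j ∧ ¬ σ j ⋖ σ i := by
    have hne : (σ i : ℕ) ≠ σ j := Fin.val_ne_of_ne (σ.injective.ne hij.ne)
    simp only [Fin.covBy_iff, Nat.covBy_iff_add_one_eq, lt_abs]
    omega
  constructor
  · intro h i j hij
    have hsucc : (i : ℕ) + 1 = j := by simpa using hij
    exact (one_lt_abs_iff hij).mp (by simpa only [hsucc] using h i (hsucc ▸ j.isLt))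
  · intro h i hi
    have hij : i ⋖ ⟨i + 1, hi⟩ := by simp
    exact (one_lt_abs_iff hij).mpr (h i _ hij)

theorem isKing_permDirectSum_iff {α : Equiv.Perm (Fin a)} {β : Equiv.Perm (Fin b)} :
    IsKing (permDirectSum α β) ↔ IsKing α ∧ IsKing β ∧
      ∀ i j, IsMax i → IsMin j → ¬ (IsStrongFixedPt α i ∧ IsStrongFixedPt β j) := by
  have not_natAdd_covBy_castAdd (j : Fin b) (i : Fin a) :
      ¬ Fin.natAdd a j ⋖ Fin.castAdd b i :=
    fun h => h.lt.not_gt (castAdd_lt_natAdd i j)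
  have junction : (∀ i j, IsMax i → IsMin j → ¬ (IsStrongFixedPt α i ∧ IsStrongFixedPt β j)) ↔
      ∀ i j, IsMax i ∧ IsMin j → ¬ (IsMax (α i) ∧ IsMin (β j)) := by
    grind [isStrongFixedPt_iff_of_isMax, isStrongFixedPt_iff_of_isMin]
  simp only [junction, isKing_iff_covBy, Fin.forall_fin_add, permDirectSum_castAdd,
    permDirectSum_natAdd, castAdd_covBy_castAdd_iff, natAdd_covBy_natAdd_iff,
    castAdd_covBy_natAdd_iff, not_natAdd_covBy_castAdd]
  grind

/-- The permutation `α ⊕ 1 ⊕ β`: the general permutation with a strong fixed point at position `a`,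
which `α` precedes and `β` follows. -/
def joinAtFixedPt (α : Equiv.Perm (Fin a)) (β : Equiv.Perm (Fin b)) :
    Equiv.Perm (Fin (a + 1 + b)) :=
  permDirectSum (permDirectSum α (1 : Equiv.Perm (Fin 1))) β

theorem joinAtFixedPt_inj {α α' : Equiv.Perm (Fin a)} {β β' : Equiv.Perm (Fin b)} :
    joinAtFixedPt α β = joinAtFixedPt α' β' ↔ α = α' ∧ β = β' := by
  simp only [joinAtFixedPt, permDirectSum_inj, and_true]

theorem exists_joinAtFixedPt_eq {σ : Equiv.Perm (Fin (a + 1 + b))}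
    (h : IsStrongFixedPt σ (Fin.castAdd b (Fin.last a))) :
    ∃ (α : Equiv.Perm (Fin a)) (β : Equiv.Perm (Fin b)), joinAtFixedPt α β = σ := by
  obtain ⟨τ, β, rfl⟩ : ∃ (τ : Equiv.Perm (Fin (a + 1))) (β : Equiv.Perm (Fin b)),
      permDirectSum τ β = σ := exists_permDirectSum_eq fun i => by
    have hle : σ (Fin.castAdd b i) ≤ σ (Fin.castAdd b (Fin.last a)) :=
      h.apply_le_apply_iff.mpr ((Fin.strictMono_castAdd b).monotone i.le_last)
    rw [h.apply_eq] at hle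
    exact Nat.lt_succ_of_le hle
  rw [isStrongFixedPt_permDirectSum_castAdd] at h
  obtain ⟨α, γ, rfl⟩ : ∃ (α : Equiv.Perm (Fin a)) (γ : Equiv.Perm (Fin 1)),
      permDirectSum α γ = τ := exists_permDirectSum_eq fun i => by
    have hlt := h.1 (Fin.castAdd 1 i) (Fin.castSucc_lt_last i)
    rwa [h.apply_eq] at hlt
  exact ⟨α, β, by rw [Subsingleton.elim γ 1, joinAtFixedPt]⟩

variable {α : Equiv.Perm (Fin a)} {β : Equiv.Perm (Fin b)}

theorem firstStrongFixedPt_joinAtFixedPt_eq_iff :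
    firstStrongFixedPt (joinAtFixedPt α β) = (Fin.castAdd b (Fin.last a) : Fin (a + 1 + b)) ↔
      ∀ i, ¬ IsStrongFixedPt α i := by
  have hlast : IsStrongFixedPt (permDirectSum α 1) (Fin.last a) :=
    isStrongFixedPt_permDirectSum_natAdd (j := 0).mpr (by simp [IsStrongFixedPt])
  have hlt (i : Fin a) : Fin.castAdd 1 i < Fin.last a := Fin.castSucc_lt_last i
  simp only [firstStrongFixedPt_eq_coe_iff, joinAtFixedPt, Fin.forall_fin_add,
    isStrongFixedPt_permDirectSum_castAdd, isStrongFixedPt_permDirectSum_natAdd, hlast,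
    (Fin.strictMono_castAdd b).lt_iff_lt, hlt, (castAdd_lt_natAdd _ _).not_gt]
  simp [show Fin.natAdd a 0 = Fin.last a from rfl]

theorem isKing_joinAtFixedPt_iff :
    IsKing (joinAtFixedPt α β) ↔
      (IsKing α ∧ ∀ i, IsMax i → ¬ IsStrongFixedPt α i) ∧
        IsKing β ∧ ∀ j, IsMin j → ¬ IsStrongFixedPt β j := by
  have isMin_one (i : Fin 1) : IsMin i := by simp [IsMin]
  have isStrongFixedPt_one (i : Fin 1) : IsStrongFixedPt 1 i := by simp [IsStrongFixedPt]
  have isKing_one : IsKing (1 : Equiv.Perm (Fin 1)) := fun i h => by omega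
  have isMax_natAdd (i : Fin 1) : IsMax (Fin.natAdd a i) := by
    rw [Subsingleton.elim i 0]
    exact fun j _ => j.le_last
  have not_isMax_castAdd (i : Fin a) : ¬ IsMax (Fin.castAdd 1 i) :=
    fun h => h.not_lt (Fin.castSucc_lt_last i)
  simp only [joinAtFixedPt, isKing_permDirectSum_iff, Fin.forall_fin_add, isKing_one,
    isStrongFixedPt_permDirectSum_natAdd, isMax_natAdd, not_isMax_castAdd, isMin_one,
    isStrongFixedPt_one]
  simp

end DirectSum

section Counting

theorem card_and_mem_eq_sum_card {X ι : Type*} [Finite X] (p : X → Prop) (f : X → ι)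
    (S : Finset ι) :
    Nat.card {x // p x ∧ f x ∈ S} = ∑ s ∈ S, Nat.card {x // p x ∧ f x = s} := by
  classical
  have := Fintype.ofFinite X
  simp only [Nat.card_eq_fintype_card, Fintype.card_subtype]
  rw [Finset.card_eq_sum_card_fiberwise (f := f) (t := S) fun _ hx => by
    simpa using (Finset.mem_filter.mp hx).2.2]
  refine Finset.sum_congr rfl fun s hs => congrArg Finset.card ?_
  ext x
  simp only [Finset.mem_filter, Finset.mem_univ, true_and]
  exact ⟨fun h => ⟨h.1.1, h.2⟩, fun h => ⟨⟨h.1, h.2 ▸ hs⟩, h.2⟩⟩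

theorem card_subtype_eq_one_of_unique {X : Type*} [Unique X] {p : X → Prop} (h : p default) :
    Nat.card {x // p x} = 1 :=
  Nat.card_eq_one_iff_unique.mpr ⟨inferInstance, ⟨default, h⟩⟩

/-- The number of king permutations of length `n` without strong fixed points. -/
noncomputable def noStrongFixedPtKingCount (n : ℕ) : ℕ :=
  Nat.card {σ : Equiv.Perm (Fin n) // IsKing σ ∧ ∀ i, ¬ IsStrongFixedPt σ i}

/-- The number of king permutations of length `n` whose first entry is not their least one, i.e. is
not a strong fixed point. Quantifying over `IsMin i` includes the empty permutation. -/
noncomputable def headNotMinKingCount (n : ℕ) : ℕ :=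
  Nat.card {σ : Equiv.Perm (Fin n) // IsKing σ ∧ ∀ i, IsMin i → ¬ IsStrongFixedPt σ i}

theorem card_isKing_and_firstStrongFixedPt_eq_castAdd_last (a b : ℕ) :
    Nat.card {σ : Equiv.Perm (Fin (a + 1 + b)) //
      IsKing σ ∧ firstStrongFixedPt σ = (Fin.castAdd b (Fin.last a) : Fin (a + 1 + b))} =
      noStrongFixedPtKingCount a * headNotMinKingCount b := by
  have isKing_and_iff (α : Equiv.Perm (Fin a)) (β : Equiv.Perm (Fin b)) :
      IsKing (joinAtFixedPt α β) ∧ firstStrongFixedPt (joinAtFixedPt α β) =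
          (Fin.castAdd b (Fin.last a) : Fin (a + 1 + b)) ↔
        (IsKing α ∧ ∀ i, ¬ IsStrongFixedPt α i) ∧
          IsKing β ∧ ∀ j, IsMin j → ¬ IsStrongFixedPt β j := by
    rw [isKing_joinAtFixedPt_iff, firstStrongFixedPt_joinAtFixedPt_eq_iff]
    exact ⟨fun h => ⟨⟨h.1.1.1, h.2⟩, h.1.2⟩, fun h => ⟨⟨⟨h.1.1, fun i _ => h.1.2 i⟩, h.2⟩, h.1.2⟩⟩
  rw [noStrongFixedPtKingCount, headNotMinKingCount, ← Nat.card_prod]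
  refine (Nat.card_eq_of_bijective
    (fun p => ⟨joinAtFixedPt p.1.1 p.2.1, (isKing_and_iff _ _).mpr ⟨p.1.2, p.2.2⟩⟩)
    ⟨fun p q h => ?_, fun ⟨σ, hσ⟩ => ?_⟩).symm
  · obtain ⟨h₁, h₂⟩ := joinAtFixedPt_inj.mp (congrArg Subtype.val h)
    exact Prod.ext (Subtype.ext h₁) (Subtype.ext h₂)
  · obtain ⟨α, β, rfl⟩ := exists_joinAtFixedPt_eq (firstStrongFixedPt_eq_coe_iff.mp hσ.2).1
    obtain ⟨hα, hβ⟩ := (isKing_and_iff α β).mp hσ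
    exact ⟨(⟨α, hα⟩, ⟨β, hβ⟩), rfl⟩

theorem card_isKing_and_firstStrongFixedPt_eq_coe {n : ℕ} (i : Fin n) :
    Nat.card {σ : Equiv.Perm (Fin n) // IsKing σ ∧ firstStrongFixedPt σ = i} =
      noStrongFixedPtKingCount i * headNotMinKingCount i.rev := by
  obtain ⟨a, ha⟩ := i
  obtain ⟨b, rfl⟩ := Nat.exists_eq_add_of_le ha
  have val_rev : ((⟨a, ha⟩ : Fin (a + 1 + b)).rev : ℕ) = b := by simp
  rw [val_rev]
  exact card_isKing_and_firstStrongFixedPt_eq_castAdd_last a b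

theorem kingCount_eq_add_sum (n : ℕ) :
    kingCount n = noStrongFixedPtKingCount n +
      ∑ i : Fin n, noStrongFixedPtKingCount i * headNotMinKingCount i.rev := by
  have hsum := card_and_mem_eq_sum_card (IsKing (n := n)) firstStrongFixedPt Finset.univ
  simp only [Finset.mem_univ, and_true] at hsum
  rw [kingCount, hsum]
  refine (Fintype.sum_option _).trans (congrArg₂ _ ?_ ?_)
  · exact Nat.card_congr (Equiv.subtypeEquivRight fun σ =>
      and_congr_right fun _ => firstStrongFixedPt_eq_top_iff)
  · exact Fintype.sum_congr _ _ card_isKing_and_firstStrongFixedPt_eq_coe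

theorem noStrongFixedPtKingCount_zero : noStrongFixedPtKingCount 0 = 1 :=
  card_subtype_eq_one_of_unique ⟨fun i => i.elim0, fun i => i.elim0⟩

theorem headNotMinKingCount_zero : headNotMinKingCount 0 = 1 :=
  card_subtype_eq_one_of_unique ⟨fun i => i.elim0, fun i => i.elim0⟩

theorem kingCount_zero : kingCount 0 = 1 :=
  card_subtype_eq_one_of_unique fun i => i.elim0

theorem firstStrongFixedPt_eq_zero_iff {n : ℕ} {σ : Equiv.Perm (Fin (n + 1))} :
    firstStrongFixedPt σ = (0 : Fin (n + 1)) ↔ IsStrongFixedPt σ 0 := by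
  rw [firstStrongFixedPt_eq_coe_iff]
  simp

theorem kingCount_succ (n : ℕ) :
    kingCount (n + 1) = headNotMinKingCount (n + 1) + headNotMinKingCount n := by
  have card_head : Nat.card {σ : Equiv.Perm (Fin (n + 1)) // IsKing σ ∧ IsStrongFixedPt σ 0} =
      headNotMinKingCount n := by
    simp only [← firstStrongFixedPt_eq_zero_iff, card_isKing_and_firstStrongFixedPt_eq_coe]
    simp [noStrongFixedPtKingCount_zero]
  have card_not_head : Nat.card {σ : Equiv.Perm (Fin (n + 1)) // IsKing σ ∧ ¬ IsStrongFixedPt σ 0} =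
      headNotMinKingCount (n + 1) := by
    refine Nat.card_congr (Equiv.subtypeEquivRight fun σ => and_congr_right fun _ => ?_)
    exact ⟨fun h i hi => hi.eq_bot ▸ h, fun h => h 0 isMin_bot⟩
  calc kingCount (n + 1)
      = Nat.card {σ : Equiv.Perm (Fin (n + 1)) // IsKing σ ∧ IsStrongFixedPt σ 0} +
          Nat.card {σ : Equiv.Perm (Fin (n + 1)) // IsKing σ ∧ ¬ IsStrongFixedPt σ 0} :=
        (Set.ncard_inter_add_ncard_sdiff_eq_ncard {σ | IsKing σ} {σ | IsStrongFixedPt σ 0}).symm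
    _ = headNotMinKingCount n + headNotMinKingCount (n + 1) := by rw [card_head, card_not_head]
    _ = headNotMinKingCount (n + 1) + headNotMinKingCount n := add_comm _ _

theorem occP_eq_zero_iff {n : ℕ} {σ : Equiv.Perm (Fin n)} :
    occP σ = 0 ↔ ∀ i, IsStrongFixedPt σ i → IsMax i := by
  have occP_iff (i j : Fin n) : OccP σ i j ↔ i < j ∧ IsStrongFixedPt σ i :=
    ⟨fun h => ⟨h.1, h.2.2⟩, fun h => ⟨h.1, h.2.2 j h.1, h.2⟩⟩
  simp only [occP, Finite.card_eq_zero_iff, isEmpty_subtype, Prod.forall, occP_iff,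
    isMax_iff_forall_not_lt]
  grind

theorem occP_eq_zero_iff_firstStrongFixedPt {n : ℕ} {σ : Equiv.Perm (Fin (n + 1))} :
    occP σ = 0 ↔ firstStrongFixedPt σ = ⊤ ∨ firstStrongFixedPt σ = Fin.last n := by
  rw [occP_eq_zero_iff, firstStrongFixedPt_eq_top_iff, firstStrongFixedPt_eq_coe_iff]
  have isMax_iff (i : Fin (n + 1)) : IsMax i ↔ i = Fin.last n := isMax_iff_eq_top
  have lt_last_iff (i : Fin (n + 1)) : i < Fin.last n ↔ i ≠ Fin.last n := Fin.lt_last_iff_ne_last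
  simp only [isMax_iff, lt_last_iff]
  grind

theorem card_isKing_and_occP_eq_zero_zero :
    Nat.card {σ : Equiv.Perm (Fin 0) // IsKing σ ∧ occP σ = 0} = 1 :=
  card_subtype_eq_one_of_unique
    ⟨fun i => i.elim0, occP_eq_zero_iff.mpr fun i => i.elim0⟩

theorem card_isKing_and_occP_eq_zero_succ (n : ℕ) :
    Nat.card {σ : Equiv.Perm (Fin (n + 1)) // IsKing σ ∧ occP σ = 0} =
      noStrongFixedPtKingCount (n + 1) + noStrongFixedPtKingCount n := by
  have hsum := card_and_mem_eq_sum_card (IsKing (n := n + 1)) firstStrongFixedPt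
    {⊤, (Fin.last n : WithTop (Fin (n + 1)))}
  rw [Finset.sum_pair (WithTop.top_ne_coe), card_isKing_and_firstStrongFixedPt_eq_coe] at hsum
  simpa [occP_eq_zero_iff_firstStrongFixedPt, firstStrongFixedPt_eq_top_iff,
    headNotMinKingCount_zero, noStrongFixedPtKingCount] using hsum

end Counting

section GeneratingSeries

open PowerSeries

/-- The generating series of the king permutations without strong fixed points. -/
noncomputable def noStrongFixedPtKingSeries : ℚ⟦X⟧ :=
  mk fun n => (noStrongFixedPtKingCount n : ℚ)

/-- The generating series of the king permutations whose first entry is not their least one. -/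
noncomputable def headNotMinKingSeries : ℚ⟦X⟧ :=
  mk fun n => (headNotMinKingCount n : ℚ)

theorem kingA_eq_one_add_X_mul : kingA = (1 + X) * headNotMinKingSeries := by
  ext (_ | n) <;> rw [add_mul, one_mul, map_add]
  · simp [kingA, headNotMinKingSeries, kingCount_zero, headNotMinKingCount_zero]
  · simp [kingA, headNotMinKingSeries, kingCount_succ, coeff_succ_X_mul]

theorem Pav_eq_one_add_X_mul : Pav = (1 + X) * noStrongFixedPtKingSeries := by
  ext (_ | n) <;> rw [add_mul, one_mul, map_add]
  · simp [Pav, noStrongFixedPtKingSeries, card_isKing_and_occP_eq_zero_zero,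
      noStrongFixedPtKingCount_zero]
  · simp [Pav, noStrongFixedPtKingSeries, card_isKing_and_occP_eq_zero_succ, coeff_succ_X_mul]

theorem kingA_eq_add_X_mul :
    kingA = noStrongFixedPtKingSeries +
      X * (noStrongFixedPtKingSeries * headNotMinKingSeries) := by
  ext (_ | n) <;> rw [map_add]
  · simp [kingA, noStrongFixedPtKingSeries, kingCount_eq_add_sum]
  · rw [coeff_succ_X_mul, coeff_mul, Finset.Nat.sum_antidiagonal_eq_sum_range_succ_mk,
      Finset.sum_range]
    simp [kingA, noStrongFixedPtKingSeries, headNotMinKingSeries, kingCount_eq_add_sum]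

end GeneratingSeries

theorem statement_12 :
    (1 + PowerSeries.X + PowerSeries.X * kingA) * Pav
      = (1 + PowerSeries.X) ^ 2 * kingA := by
  let F := noStrongFixedPtKingSeries
  let G := headNotMinKingSeries
  calc (1 + PowerSeries.X + PowerSeries.X * kingA) * Pav
      = (1 + PowerSeries.X + PowerSeries.X * ((1 + PowerSeries.X) * G)) *
          ((1 + PowerSeries.X) * F) := by
        rw [Pav_eq_one_add_X_mul, ← kingA_eq_one_add_X_mul]
    _ = (1 + PowerSeries.X) ^ 2 * (F + PowerSeries.X * (F * G)) := by ring
    _ = (1 + PowerSeries.X) ^ 2 * kingA := by rw [← kingA_eq_add_X_mul]
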